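/- (Lemma 4) Under the hypotheses of the nonnegative bivariate decomposition, suppose ŪI*(S;X₁\X₂) = 0 and let f* attain the maximum defining SĪ(S;X₁,X₂). Then X₁ — f*(S) — S forms a Markov chain (i.e., X₁ and S are conditionally independent given f*(S)), and UI(f*(S);X₁\X₂) = 0. -/

import Mathlib

/- Common definitions: finite joint distributions, mutual information (in nats),
   conditional mutual information, pushforwards, information decompositions. -/

open Finset
open scoped Classical

namespace Paper

noncomputable section

variable {S T T' X X₁ X₂ Z A B : Type*}

/-- Marginal of the first variable of a joint distribution. -/
def m1 [Fintype X] (p : S → X → ℝ) (s : S) : ℝ := ∑ x, p s x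

/-- Marginal of the second variable of a joint distribution. -/
def m2 [Fintype S] (p : S → X → ℝ) (x : X) : ℝ := ∑ s, p s x

/-- Mutual information I(S;X) (in nats) of a finite joint distribution. -/
def MI [Fintype S] [Fintype X] (p : S → X → ℝ) : ℝ :=
  ∑ s, ∑ x, p s x * Real.log (p s x / (m1 p s * m2 p x))

/-- `p` is a probability mass function on the product of two finite alphabets. -/
def IsPMF [Fintype S] [Fintype X] (p : S → X → ℝ) : Prop :=
  (∀ s x, 0 ≤ p s x) ∧ ∑ s, ∑ x, p s x = 1

/-- `p` is a probability mass function on the product of three finite alphabets. -/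
def IsPMF3 [Fintype S] [Fintype X₁] [Fintype X₂] (p : S → X₁ → X₂ → ℝ) : Prop :=
  (∀ s x₁ x₂, 0 ≤ p s x₁ x₂) ∧ ∑ s, ∑ x₁, ∑ x₂, p s x₁ x₂ = 1

/-- Marginal joint distribution of (S,X₁). -/
def m12 [Fintype X₂] (p : S → X₁ → X₂ → ℝ) : S → X₁ → ℝ := fun s x₁ => ∑ x₂, p s x₁ x₂

/-- Marginal joint distribution of (S,X₂). -/
def m13 [Fintype X₁] (p : S → X₁ → X₂ → ℝ) : S → X₂ → ℝ := fun s x₂ => ∑ x₁, p s x₁ x₂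

/-- Joint distribution of (S,(X₁,X₂)). -/
def joint (p : S → X₁ → X₂ → ℝ) : S → X₁ × X₂ → ℝ := fun s x => p s x.1 x.2

/-- I(S;X₁). -/
def MI1 [Fintype S] [Fintype X₁] [Fintype X₂] (p : S → X₁ → X₂ → ℝ) : ℝ := MI (m12 p)

/-- I(S;X₂). -/
def MI2 [Fintype S] [Fintype X₁] [Fintype X₂] (p : S → X₁ → X₂ → ℝ) : ℝ := MI (m13 p)

/-- I(S;X₁X₂). -/
def MI12 [Fintype S] [Fintype X₁] [Fintype X₂] (p : S → X₁ → X₂ → ℝ) : ℝ := MI (joint p)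

/-- Conditional mutual information I(S;X₁ ∣ X₂) (in nats). -/
def CMI [Fintype S] [Fintype X₁] [Fintype X₂] (p : S → X₁ → X₂ → ℝ) : ℝ :=
  ∑ s, ∑ x₁, ∑ x₂, p s x₁ x₂ *
    Real.log ((p s x₁ x₂ * (∑ s', ∑ x₁', p s' x₁' x₂)) /
      ((∑ x₁', p s x₁' x₂) * (∑ s', p s' x₁ x₂)))

/-- Co-information CoI(S;X₁,X₂) = I(S;X₁) − I(S;X₁|X₂). -/
def CoI [Fintype S] [Fintype X₁] [Fintype X₂] (p : S → X₁ → X₂ → ℝ) : ℝ :=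
  MI1 p - CMI p

/-- Swap the two predictor arguments. -/
def swap23 (p : S → X₁ → X₂ → ℝ) : S → X₂ → X₁ → ℝ := fun s x₂ x₁ => p s x₁ x₂

/-- Pushforward of the target variable S by a function f (joint of (f(S),X)). -/
def pushS [Fintype S] (f : S → T) (p : S → X → ℝ) : T → X → ℝ :=
  fun t x => ∑ s, if f s = t then p s x else 0

/-- Pushforward of the target variable S by f, for triples (joint of (f(S),X₁,X₂)). -/
def pushS3 [Fintype S] (f : S → T) (p : S → X₁ → X₂ → ℝ) : T → X₁ → X₂ → ℝ :=
  fun t x₁ x₂ => ∑ s, if f s = t then p s x₁ x₂ else 0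

/-- Joint distribution of the triple (f(S), S, X), from the joint of (S,X). -/
def tripleOf (f : S → T) (p : S → X → ℝ) : T → S → X → ℝ :=
  fun t s x => if f s = t then p s x else 0

/-- A and B are conditionally independent given Z (r is the joint of (Z,A,B));
    equivalently A — Z — B is a Markov chain. -/
def CondIndep [Fintype A] [Fintype B] (r : Z → A → B → ℝ) : Prop :=
  ∀ z a b, r z a b * (∑ a', ∑ b', r z a' b') = (∑ b', r z a b') * (∑ a', r z a' b)

/-- The channel T → X₁ (given by the joint q1) is a garbling/degradation of the
    channel T → X₂ (given by the joint q2): q1 = λ ∘ q2 for a stochastic matrix λ. -/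
def Garbling [Fintype X₁] [Fintype X₂] (q1 : T → X₁ → ℝ) (q2 : T → X₂ → ℝ) : Prop :=
  ∃ lam : X₂ → X₁ → ℝ, (∀ x₂ x₁, 0 ≤ lam x₂ x₁) ∧ (∀ x₂, ∑ x₁, lam x₂ x₁ = 1) ∧
    ∀ t x₁, q1 t x₁ = ∑ x₂, lam x₂ x₁ * q2 t x₂

/-- Joint distribution of (COPY(X₁,X₂), X₁, X₂) built from the joint of (X₁,X₂). -/
def copyTriple (q : X₁ → X₂ → ℝ) : X₁ × X₂ → X₁ → X₂ → ℝ :=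
  fun t x₁ x₂ => if t = (x₁, x₂) then q x₁ x₂ else 0

/-- The extractable information measure IM̄(S;X) := max over functions f on the
    range of S of IM(f(S);X).  (Only the partition of S induced by f matters,
    so functions with codomain S suffice and the supremum is attained.) -/
def extIM [Fintype S] [Fintype X] (IM : (S → X → ℝ) → ℝ) (p : S → X → ℝ) : ℝ :=
  ⨆ f : S → S, IM (pushS f p)

/-- A nonnegative bivariate information decomposition (for fixed predictor
    alphabets X₁, X₂ and varying target alphabet T): shared, unique and
    complementary information, nonnegative and satisfying the Williams–Beer
    bivariate decomposition equations. -/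
structure BID (X₁ X₂ : Type) [Fintype X₁] [Fintype X₂] where
  SI : ∀ (T : Type) [Fintype T], (T → X₁ → X₂ → ℝ) → ℝ
  UI1 : ∀ (T : Type) [Fintype T], (T → X₁ → X₂ → ℝ) → ℝ
  UI2 : ∀ (T : Type) [Fintype T], (T → X₁ → X₂ → ℝ) → ℝ
  CI : ∀ (T : Type) [Fintype T], (T → X₁ → X₂ → ℝ) → ℝ
  SI_nonneg : ∀ (T : Type) [Fintype T] (p : T → X₁ → X₂ → ℝ), IsPMF3 p → 0 ≤ SI T p
  UI1_nonneg : ∀ (T : Type) [Fintype T] (p : T → X₁ → X₂ → ℝ), IsPMF3 p → 0 ≤ UI1 T p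
  UI2_nonneg : ∀ (T : Type) [Fintype T] (p : T → X₁ → X₂ → ℝ), IsPMF3 p → 0 ≤ UI2 T p
  CI_nonneg : ∀ (T : Type) [Fintype T] (p : T → X₁ → X₂ → ℝ), IsPMF3 p → 0 ≤ CI T p
  eq_total : ∀ (T : Type) [Fintype T] (p : T → X₁ → X₂ → ℝ), IsPMF3 p →
    MI12 p = SI T p + CI T p + UI1 T p + UI2 T p
  eq_one : ∀ (T : Type) [Fintype T] (p : T → X₁ → X₂ → ℝ), IsPMF3 p →
    MI1 p = SI T p + UI1 T p
  eq_two : ∀ (T : Type) [Fintype T] (p : T → X₁ → X₂ → ℝ), IsPMF3 p →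
    MI2 p = SI T p + UI2 T p

/-- Extractable shared information SĪ(S;X₁,X₂) := max_f SI(f(S);X₁,X₂). -/
def SIbar {X₁ X₂ : Type} [Fintype X₁] [Fintype X₂] (D : BID X₁ X₂)
    {T : Type} [Fintype T] (p : T → X₁ → X₂ → ℝ) : ℝ :=
  ⨆ f : T → T, D.SI T (pushS3 f p)

/-- Pushforward of the predictors (X₁,...,X_k) ↦ (f₁(X₁),...,f_k(X_k)). -/
def pushPred {ι : Type*} [Fintype ι] [DecidableEq ι] {X : ι → Type*} [∀ i, Fintype (X i)]
    [Fintype S] (f : ∀ i, X i → X i) (p : S → (∀ i, X i) → ℝ) : S → (∀ i, X i) → ℝ :=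
  fun s y => ∑ x, if (fun i => f i (x i)) = y then p s x else 0

/-- Marginal joint distribution of (S, X_i) for a family of predictors. -/
def margFam {ι : Type*} [Fintype ι] [DecidableEq ι] (X : ι → Type*) [∀ i, Fintype (X i)]
    [Fintype S] (p : S → (∀ i, X i) → ℝ) (i : ι) (s : S) (y : X i) : ℝ :=
  ∑ x : ∀ j, X j, if x i = y then p s x else 0

/-- Specific information of s provided by X_i:
    ∑_{x_i} P(x_i|s) log (P(s|x_i)/P(s)). -/
def specInfo {ι : Type*} [Fintype ι] [DecidableEq ι] (X : ι → Type*) [∀ i, Fintype (X i)]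
    [Fintype S] (p : S → (∀ i, X i) → ℝ) (i : ι) (s : S) : ℝ :=
  ∑ y : X i, (margFam X p i s y / m1 p s) *
    Real.log ((margFam X p i s y / (∑ s', margFam X p i s' y)) / m1 p s)

/-- Williams and Beer's measure I_min(S;X₁,...,X_k). -/
def Imin {ι : Type*} [Fintype ι] [DecidableEq ι] [Nonempty ι] (X : ι → Type*)
    [∀ i, Fintype (X i)] [Fintype S] (p : S → (∀ i, X i) → ℝ) : ℝ :=
  ∑ s, m1 p s * ⨅ i, specInfo X p i s

/-- The counterexample distribution on {0,1,2} × {0,1} × {0,1}: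
    P(0,0,0)=1/4, P(1,0,1)=1/4, P(0,1,0)=1/8, P(1,1,0)=1/8, P(2,1,1)=1/4. -/
def cex : Fin 3 → Bool → Bool → ℝ := fun s x₁ x₂ =>
  if s = 0 ∧ x₁ = false ∧ x₂ = false then 1/4
  else if s = 1 ∧ x₁ = false ∧ x₂ = true then 1/4
  else if s = 0 ∧ x₁ = true ∧ x₂ = false then 1/8
  else if s = 1 ∧ x₁ = true ∧ x₂ = false then 1/8
  else if s = 2 ∧ x₁ = true ∧ x₂ = true then 1/4
  else 0

/-- The function f with f(0)=f(1)=0, f(2)=2 on Fin 3 (the partition {0,1},{2}). -/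
def fstar : Fin 3 → Fin 3 := fun s => if s = 2 then 2 else 0

/-! The information lost in passing from `S` to `f(S)` is a relative entropy:
`I(S;X) - I(f(S);X) = D(P(s,x) ‖ P(s) P(x ∣ f(s)))`, and the second distribution is the one for
which `X — f(S) — S` is a Markov chain. So by Gibbs' inequality with its equality case the loss is
nonnegative, and zero exactly for a Markov chain. Now
`I(S;X₁) - SI(f(S);X₁,X₂) = (I(S;X₁) - I(f(S);X₁)) + UI(f(S);X₁\X₂)`
is a sum of two nonnegative terms, which vanishes only if both do. -/

section RelEntropy

variable {ι : Type*} [Fintype ι] {a b : ι → ℝ}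

/-- Relative entropy `D(a ‖ b)` (in nats) of two finite families of nonnegative weights. With the
conventions `x / 0 = 0` and `log 0 = 0` it is meaningful only if `a` vanishes wherever `b` does. -/
def relEntropy (a b : ι → ℝ) : ℝ := ∑ i, a i * Real.log (a i / b i)

theorem relEntropy_eq_sum_mul_klFun (hab : ∀ i, b i = 0 → a i = 0)
    (hsum : ∑ i, a i = ∑ i, b i) :
    relEntropy a b = ∑ i, b i * InformationTheory.klFun (a i / b i) := by
  have hterm (i : ι) : b i * InformationTheory.klFun (a i / b i) =
      a i * Real.log (a i / b i) + (b i - a i) := by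
    rw [InformationTheory.klFun_apply]
    linear_combination (Real.log (a i / b i) - 1) * mul_div_cancel_of_imp' (hab i)
  simp only [hterm, sum_add_distrib, sum_sub_distrib, hsum, sub_self, add_zero, relEntropy]

theorem mul_klFun_div_nonneg {x y : ℝ} (hx : 0 ≤ x) (hy : 0 ≤ y) :
    0 ≤ y * InformationTheory.klFun (x / y) :=
  mul_nonneg hy (InformationTheory.klFun_nonneg (div_nonneg hx hy))

theorem mul_klFun_div_eq_zero_iff {x y : ℝ} (hx : 0 ≤ x) (hy : 0 ≤ y) (hxy : y = 0 → x = 0) :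
    y * InformationTheory.klFun (x / y) = 0 ↔ x = y := by
  rcases eq_or_ne y 0 with rfl | hy0
  · simp [hxy rfl]
  · rw [mul_eq_zero_iff_left hy0, InformationTheory.klFun_eq_zero_iff (div_nonneg hx hy),
      div_eq_one_iff_eq hy0]

theorem relEntropy_nonneg (ha : ∀ i, 0 ≤ a i) (hb : ∀ i, 0 ≤ b i)
    (hab : ∀ i, b i = 0 → a i = 0) (hsum : ∑ i, a i = ∑ i, b i) : 0 ≤ relEntropy a b := by
  rw [relEntropy_eq_sum_mul_klFun hab hsum]
  exact sum_nonneg fun i _ => mul_klFun_div_nonneg (ha i) (hb i)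

theorem relEntropy_eq_zero_iff (ha : ∀ i, 0 ≤ a i) (hb : ∀ i, 0 ≤ b i)
    (hab : ∀ i, b i = 0 → a i = 0) (hsum : ∑ i, a i = ∑ i, b i) :
    relEntropy a b = 0 ↔ ∀ i, a i = b i := by
  rw [relEntropy_eq_sum_mul_klFun hab hsum,
    sum_eq_zero_iff_of_nonneg fun i _ => mul_klFun_div_nonneg (ha i) (hb i)]
  simp only [mem_univ, true_imp_iff, mul_klFun_div_eq_zero_iff (ha _) (hb _) (hab _)]

end RelEntropy

section Marginals

variable {q : S → X → ℝ}

theorem m1_nonneg [Fintype X] (hq : ∀ s x, 0 ≤ q s x) (s : S) : 0 ≤ m1 q s :=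
  sum_nonneg fun x _ => hq s x

theorem le_m1 [Fintype X] (hq : ∀ s x, 0 ≤ q s x) (s : S) (x : X) : q s x ≤ m1 q s :=
  single_le_sum (fun x _ => hq s x) (mem_univ x)

theorem le_m2 [Fintype S] (hq : ∀ s x, 0 ≤ q s x) (s : S) (x : X) : q s x ≤ m2 q x :=
  single_le_sum (f := fun s => q s x) (fun s _ => hq s x) (mem_univ s)

end Marginals

section Pushforward

variable [Fintype S] {q : S → X → ℝ}

theorem pushS_nonneg (hq : ∀ s x, 0 ≤ q s x) (f : S → T) (t : T) (x : X) : 0 ≤ pushS f q t x :=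
  sum_nonneg fun s _ => ite_nonneg (hq s x) le_rfl

theorem le_pushS (hq : ∀ s x, 0 ≤ q s x) (f : S → T) (s : S) (x : X) :
    q s x ≤ pushS f q (f s) x := by
  calc q s x = if f s = f s then q s x else 0 := (if_pos rfl).symm
    _ ≤ pushS f q (f s) x := single_le_sum (f := fun s' => if f s' = f s then q s' x else 0)
        (fun s' _ => ite_nonneg (hq s' x) le_rfl) (mem_univ s)

theorem m1_le_m1_pushS [Fintype X] (hq : ∀ s x, 0 ≤ q s x) (f : S → T) (s : S) :
    m1 q s ≤ m1 (pushS f q) (f s) :=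
  sum_le_sum fun x _ => le_pushS hq f s x

theorem sum_pushS_mul [Fintype T] (f : S → T) (q : S → X → ℝ) (x : X) (g : T → ℝ) :
    ∑ t, pushS f q t x * g t = ∑ s, q s x * g (f s) := by
  simp only [pushS, sum_mul]
  rw [sum_comm]
  simp only [ite_mul, zero_mul, sum_ite_eq, mem_univ, if_true]

theorem m2_pushS [Fintype T] (f : S → T) (q : S → X → ℝ) : m2 (pushS f q) = m2 q := by
  funext x
  simpa only [mul_one, m2] using sum_pushS_mul f q x fun _ => 1

theorem IsPMF.pushS [Fintype T] [Fintype X] (hq : IsPMF q) (f : S → T) : IsPMF (pushS f q) := by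
  refine ⟨pushS_nonneg hq.1 f, ?_⟩
  calc ∑ t, ∑ x, Paper.pushS f q t x
      = ∑ x, m2 (Paper.pushS f q) x := sum_comm
    _ = ∑ x, m2 q x := by rw [m2_pushS]
    _ = ∑ s, ∑ x, q s x := sum_comm
    _ = 1 := hq.2

theorem MI_pushS [Fintype T] [Fintype X] (f : S → T) (q : S → X → ℝ) :
    MI (pushS f q) = ∑ s, ∑ x, q s x *
      Real.log (pushS f q (f s) x / (m1 (pushS f q) (f s) * m2 q x)) := by
  simp only [MI, m2_pushS]
  rw [sum_comm, sum_comm (s := (univ : Finset S))]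
  exact sum_congr rfl fun x _ => sum_pushS_mul f q x
    fun t => Real.log (pushS f q t x / (m1 (pushS f q) t * m2 q x))

end Pushforward

section MarkovJoint

variable [Fintype S] [Fintype X] {q : S → X → ℝ}

/-- The joint distribution `P(s) P(x ∣ f(s))` of `S` and `X`: it makes `X — f(S) — S` a Markov chain
and has the same marginal of `S` and the same joint law of `f(S)` and `X` as `q`. -/
def markovJoint (f : S → T) (q : S → X → ℝ) (s : S) (x : X) : ℝ :=
  m1 q s * pushS f q (f s) x / m1 (pushS f q) (f s)

theorem markovJoint_nonneg (hq : ∀ s x, 0 ≤ q s x) (f : S → T) (s : S) (x : X) :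
    0 ≤ markovJoint f q s x :=
  div_nonneg (mul_nonneg (m1_nonneg hq s) (pushS_nonneg hq f _ x))
    (m1_nonneg (pushS_nonneg hq f) _)

theorem eq_zero_of_m1_pushS_eq_zero (hq : ∀ s x, 0 ≤ q s x) {f : S → T} {s : S}
    (h : m1 (pushS f q) (f s) = 0) : m1 q s = 0 :=
  le_antisymm (h ▸ m1_le_m1_pushS hq f s) (m1_nonneg hq s)

theorem sum_markovJoint (hq : ∀ s x, 0 ≤ q s x) (f : S → T) (s : S) :
    ∑ x, markovJoint f q s x = m1 q s := by
  calc ∑ x, markovJoint f q s x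
      = m1 q s * m1 (pushS f q) (f s) / m1 (pushS f q) (f s) := by
        simp only [markovJoint, ← sum_div, ← mul_sum, m1]
    _ = m1 q s := mul_div_cancel_of_imp (eq_zero_of_m1_pushS_eq_zero hq)

theorem sum_uncurry_markovJoint (hq : ∀ s x, 0 ≤ q s x) (f : S → T) :
    ∑ i, (markovJoint f q).uncurry i = ∑ i, q.uncurry i := by
  simp only [Fintype.sum_prod_type, Function.uncurry_apply_pair, sum_markovJoint hq, m1]

theorem eq_zero_of_markovJoint_eq_zero (hq : ∀ s x, 0 ≤ q s x) {f : S → T} {s : S} {x : X}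
    (h : markovJoint f q s x = 0) : q s x = 0 := by
  have hm1 (h : m1 q s = 0) : q s x = 0 := le_antisymm (h ▸ le_m1 hq s x) (hq s x)
  rcases div_eq_zero_iff.1 h with hnum | hden
  · rcases mul_eq_zero.1 hnum with hs | hpush
    · exact hm1 hs
    · exact le_antisymm (hpush ▸ le_pushS hq f s x) (hq s x)
  · exact hm1 (eq_zero_of_m1_pushS_eq_zero hq hden)

theorem eq_markovJoint_iff (hq : ∀ s x, 0 ≤ q s x) (f : S → T) (s : S) (x : X) :
    q s x = markovJoint f q s x ↔
      q s x * m1 (pushS f q) (f s) = m1 q s * pushS f q (f s) x := by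
  by_cases hm : m1 (pushS f q) (f s) = 0
  · have hs : m1 q s = 0 := eq_zero_of_m1_pushS_eq_zero hq hm
    have hsx : q s x = 0 := le_antisymm (hs ▸ le_m1 hq s x) (hq s x)
    simp [markovJoint, hm, hs, hsx]
  · rw [markovJoint, eq_div_iff hm]

theorem condIndep_tripleOf_iff (hq : ∀ s x, 0 ≤ q s x) (f : S → T) :
    CondIndep (tripleOf f q) ↔ ∀ s x, q s x = markovJoint f q s x := by
  have hmass (t : T) : ∑ s, ∑ x, tripleOf f q t s x = m1 (pushS f q) t := sum_comm
  have hpush (t : T) (x : X) : ∑ s, tripleOf f q t s x = pushS f q t x := rfl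
  simp only [eq_markovJoint_iff hq, CondIndep, hmass, hpush]
  constructor
  · intro h s x
    simpa [tripleOf, m1] using h (f s) s x
  · intro h t s x
    by_cases hst : f s = t
    · subst hst
      simpa [tripleOf, m1] using h s x
    · simp [tripleOf, hst]

end MarkovJoint

section DataProcessing

variable [Fintype S] [Fintype T] [Fintype X] {q : S → X → ℝ}

theorem MI_sub_MI_pushS (hq : ∀ s x, 0 ≤ q s x) (f : S → T) :
    MI q - MI (pushS f q) = relEntropy q.uncurry (markovJoint f q).uncurry := by
  rw [MI_pushS]
  simp only [MI, relEntropy, Fintype.sum_prod_type, Function.uncurry_apply_pair,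
    ← sum_sub_distrib, ← mul_sub]
  refine sum_congr rfl fun s _ => sum_congr rfl fun x _ => ?_
  rcases (hq s x).eq_or_lt with hzero | hpos
  · simp [← hzero]
  have hm1 : 0 < m1 q s := hpos.trans_le (le_m1 hq s x)
  have hm2 : 0 < m2 q x := hpos.trans_le (le_m2 hq s x)
  have hpush : 0 < pushS f q (f s) x := hpos.trans_le (le_pushS hq f s x)
  have hm1_push : 0 < m1 (pushS f q) (f s) := hm1.trans_le (m1_le_m1_pushS hq f s)
  rw [← Real.log_div (by positivity) (by positivity), markovJoint]
  congr 2
  field_simp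

theorem MI_pushS_le (hq : ∀ s x, 0 ≤ q s x) (f : S → T) : MI (pushS f q) ≤ MI q := by
  rw [← sub_nonneg, MI_sub_MI_pushS hq]
  exact relEntropy_nonneg (fun _ => hq _ _) (fun _ => markovJoint_nonneg hq f _ _)
    (fun _ => eq_zero_of_markovJoint_eq_zero hq) (sum_uncurry_markovJoint hq f).symm

theorem MI_pushS_eq_iff_condIndep (hq : ∀ s x, 0 ≤ q s x) (f : S → T) :
    MI (pushS f q) = MI q ↔ CondIndep (tripleOf f q) := by
  have hGibbs : relEntropy q.uncurry (markovJoint f q).uncurry = 0 ↔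
      ∀ i, q.uncurry i = (markovJoint f q).uncurry i :=
    relEntropy_eq_zero_iff (fun _ => hq _ _) (fun _ => markovJoint_nonneg hq f _ _)
      (fun _ => eq_zero_of_markovJoint_eq_zero hq) (sum_uncurry_markovJoint hq f).symm
  rw [eq_comm, ← sub_eq_zero, MI_sub_MI_pushS hq, hGibbs, condIndep_tripleOf_iff hq]
  simp only [Prod.forall, Function.uncurry_apply_pair]

end DataProcessing

section Triples

variable {p : S → X₁ → X₂ → ℝ}

theorem isPMF_joint_iff [Fintype S] [Fintype X₁] [Fintype X₂] :
    IsPMF (joint p) ↔ IsPMF3 p := by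
  simp only [IsPMF, IsPMF3, joint, Prod.forall, Fintype.sum_prod_type]

theorem joint_pushS3 [Fintype S] (f : S → T) (p : S → X₁ → X₂ → ℝ) :
    joint (pushS3 f p) = pushS f (joint p) := rfl

theorem IsPMF3.pushS3 [Fintype S] [Fintype T] [Fintype X₁] [Fintype X₂] (hp : IsPMF3 p)
    (f : S → T) : IsPMF3 (pushS3 f p) := by
  rw [← isPMF_joint_iff, joint_pushS3]
  exact (isPMF_joint_iff.2 hp).pushS f

theorem m12_nonneg [Fintype X₂] (hp : ∀ s x₁ x₂, 0 ≤ p s x₁ x₂) (s : S) (x₁ : X₁) :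
    0 ≤ m12 p s x₁ :=
  sum_nonneg fun x₂ _ => hp s x₁ x₂

theorem m12_pushS3 [Fintype S] [Fintype X₂] (f : S → T) (p : S → X₁ → X₂ → ℝ) :
    m12 (pushS3 f p) = pushS f (m12 p) := by
  funext t x₁
  simp only [m12, pushS3, pushS]
  rw [sum_comm]
  exact sum_congr rfl fun s _ => by split_ifs <;> simp

end Triples

theorem zero_UIbar_star_general {X₁ X₂ : Type} [Fintype X₁] [Fintype X₂] (D : BID X₁ X₂)
    {T T' : Type} [Fintype T] [Fintype T'] (p : T → X₁ → X₂ → ℝ) (hp : IsPMF3 p) (f : T → T') :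
    D.SI T' (pushS3 f p) = MI1 p ↔
      CondIndep (tripleOf f (m12 p)) ∧ D.UI1 T' (pushS3 f p) = 0 := by
  have hq := m12_nonneg hp.1
  have hdpi : MI (pushS f (m12 p)) ≤ MI1 p := MI_pushS_le hq f
  have hdecomp : MI (pushS f (m12 p)) = D.SI T' (pushS3 f p) + D.UI1 T' (pushS3 f p) := by
    rw [← m12_pushS3]
    exact D.eq_one T' _ (hp.pushS3 f)
  have hUI := D.UI1_nonneg T' _ (hp.pushS3 f)
  rw [← MI_pushS_eq_iff_condIndep hq, ← MI1]
  constructor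
  · intro hSI
    constructor <;> linarith
  · rintro ⟨hMI, hUI0⟩
    linarith

/-- Lemma 4: if ŪI*(S;X₁\X₂) = 0 and f* attains the maximum defining
SĪ(S;X₁,X₂), then X₁ — f*(S) — S is a Markov chain and UI(f*(S);X₁\X₂) = 0. -/
theorem zero_UIbar_star {X₁ X₂ : Type} [Fintype X₁] [Fintype X₂]
    (D : BID X₁ X₂) {T : Type} [Fintype T]
    (p : T → X₁ → X₂ → ℝ) (hp : IsPMF3 p)
    (f : T → T) (hf : D.SI T (pushS3 f p) = SIbar D p)
    (h0 : MI1 p - SIbar D p = 0) :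
    CondIndep (tripleOf f (m12 p)) ∧ D.UI1 T (pushS3 f p) = 0 :=
  (zero_UIbar_star_general D p hp f).1 (by linarith)

end
end Paper
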